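/- (Proposition 2.) Let A = (A₁, A₂) be a commuting 2-contraction on H such that D_{A*} is injective, and let (z₁,z₂) ∈ 𝔻². If there exists y ≠ 0 in H with (θ_A(z₁,z₂))*(D_{A*}y) = 0, then (z₁,z₂) ∈ σ_T^{(3)}(A). -/

import Mathlib

/-!
Write `D⋆` for `Dstar`, `A` for the row operator `Arow` and `Z` for `Zrow`. Since
`DA² A* = A* D⋆²`, the positive square roots intertwine: `DA A* = A* D⋆` (`sqrt_intertwine`).
Hence the hypothesis `θ* (D⋆ y) = 0` reads `DA (Z* w - A* y) = 0` with `w = R* D⋆² y`. Injectivity of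
`D⋆` forces injectivity of `DA`: if `x = A* A x`, then `D⋆² (A x) = 0`, so `A x = 0` and `x = 0`.
Therefore `A* y = Z* w`, that is `Aᵢ* y = conj zᵢ • w`. Now both `D⋆² y = y - A A* y` and
`D⋆² y = (R*)⁻¹ w = w - conj z₁ • A₁ w - conj z₂ • A₂ w` hold, and comparing them gives `w = y`.
So `y` is a joint eigenvector of the `Aᵢ*` with eigenvalues `conj zᵢ`, which makes it
orthogonal to the range of `(x₁, x₂) ↦ (A₁ - z₁) x₁ - (A₂ - z₂) x₂`.
-/

open ContinuousLinearMap Filter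

/-- Positive operators `S`, `D` intertwine as soon as their squares do, provided `D` is injective.
The defect `Y = S X - X D` satisfies `S Y = -Y D`, so `Y*Y D = -Y* S Y ≤ 0` is self-adjoint; thus
`Y*Y` and `D` commute, whence also `Y*Y D ≥ 0`, so `Y*Y D = 0` and `Y = 0`. -/
theorem sqrt_intertwine {H K : Type*} [NormedAddCommGroup H] [InnerProductSpace ℂ H]
    [CompleteSpace H] [NormedAddCommGroup K] [InnerProductSpace ℂ K] [CompleteSpace K]
    (S : K →L[ℂ] K) (D : H →L[ℂ] H) (X : H →L[ℂ] K) (hS : 0 ≤ S) (hD : 0 ≤ D)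
    (hinj : Function.Injective D) (h : ∀ v, S (S (X v)) = X (D (D v))) (v : H) :
    S (X v) = X (D v) := by
  set Y : H →L[ℂ] K := S ∘L X - X ∘L D with hY
  have hSY : ∀ v, S (Y v) = -Y (D v) := by
    intro v
    simp [hY, h]
  set P : H →L[ℂ] H := adjoint Y ∘L Y with hP
  have hP0 : 0 ≤ P := (nonneg_iff_isPositive _).2 (isPositive_adjoint_comp_self Y)
  have hN0 : 0 ≤ adjoint Y ∘L S ∘L Y :=
    (nonneg_iff_isPositive _).2 (((nonneg_iff_isPositive _).1 hS).adjoint_conj Y)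
  have hPD : P * D = -(adjoint Y ∘L S ∘L Y) := by
    ext v
    simp [hP, hSY]
  have hcomm : Commute P D := by
    refine (hP0.isSelfAdjoint.commute_iff hD.isSelfAdjoint).2 ?_
    rw [hPD]
    exact hN0.isSelfAdjoint.neg
  have hzero : P * D = 0 :=
    le_antisymm (by rw [hPD]; exact neg_nonpos.2 hN0) (hcomm.mul_nonneg hP0 hD)
  have hDP : D (P v) = 0 := by
    have := congrArg (fun T : H →L[ℂ] H => T v) (hcomm.eq.symm.trans hzero)
    simpa using this
  have hPv : P v = 0 := hinj (by rw [hDP, map_zero])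
  have hYv : Y v = 0 := by
    rw [← inner_self_eq_zero (𝕜 := ℂ), ← adjoint_inner_left]
    have : adjoint Y (Y v) = 0 := hPv
    rw [this, inner_zero_left]
  simpa [hY, sub_eq_zero] using hYv

theorem adjoint_row_apply {H : Type*} [NormedAddCommGroup H] [InnerProductSpace ℂ H]
    [CompleteSpace H] (B₁ B₂ : H →L[ℂ] H) (T : WithLp 2 (H × H) →L[ℂ] H)
    (hT : ∀ x y : H, T ((WithLp.equiv 2 (H × H)).symm (x, y)) = B₁ x + B₂ y) (h : H) :
    adjoint T h = (WithLp.equiv 2 (H × H)).symm (adjoint B₁ h, adjoint B₂ h) := by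
  refine ext_inner_right ℂ fun p => ?_
  have hp : T p = B₁ p.fst + B₂ p.snd := hT p.fst p.snd
  rw [adjoint_inner_left, hp, inner_add_right, WithLp.prod_inner_apply]
  simp [adjoint_inner_left]

theorem sigma_three_sufficient
    {H : Type*} [NormedAddCommGroup H] [InnerProductSpace ℂ H] [CompleteSpace H]
    (A₁ A₂ : H →L[ℂ] H)
    (hcomm : A₁ * A₂ = A₂ * A₁)
    (hcontr : A₁ * adjoint A₁ + A₂ * adjoint A₂ ≤ 1)
    (Dstar : H →L[ℂ] H) (hDstar_pos : 0 ≤ Dstar)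
    (hDstar_sq : Dstar * Dstar = 1 - A₁ * adjoint A₁ - A₂ * adjoint A₂)
    (hDstar_inj : Function.Injective ⇑Dstar)
    (Arow : WithLp 2 (H × H) →L[ℂ] H)
    (hArow : ∀ x y : H, Arow ((WithLp.equiv 2 (H × H)).symm (x, y)) = A₁ x + A₂ y)
    (DA : WithLp 2 (H × H) →L[ℂ] WithLp 2 (H × H)) (hDA_pos : 0 ≤ DA)
    (hDA_sq : DA * DA = 1 - (adjoint Arow) ∘L Arow)
    (z₁ z₂ : ℂ) (hz : ‖z₁‖ ^ 2 + ‖z₂‖ ^ 2 < 1)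
    (R : H →L[ℂ] H) (hR₁ : R * (1 - z₁ • adjoint A₁ - z₂ • adjoint A₂) = 1)
    (hR₂ : (1 - z₁ • adjoint A₁ - z₂ • adjoint A₂) * R = 1)
    (Zrow : WithLp 2 (H × H) →L[ℂ] H)
    (hZrow : ∀ x y : H, Zrow ((WithLp.equiv 2 (H × H)).symm (x, y)) = z₁ • x + z₂ • y)
    (y : H) (hy : y ≠ 0)
    (hθ : adjoint (-Arow + Dstar ∘L R ∘L Zrow ∘L DA) (Dstar y) = 0) :
    ¬ Function.Surjective (fun p : H × H => (A₁ p.1 - z₁ • p.1) - (A₂ p.2 - z₂ • p.2)) := by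
  intro hsurj
  have hAadj := adjoint_row_apply A₁ A₂ Arow hArow
  have hZadj := adjoint_row_apply (z₁ • (1 : H →L[ℂ] H)) (z₂ • (1 : H →L[ℂ] H)) Zrow
    (by simpa using hZrow)
  have hDD : ∀ v, Dstar (Dstar v) = v - Arow (adjoint Arow v) := by
    intro v
    have := congrArg (fun T : H →L[ℂ] H => T v) hDstar_sq
    rw [hAadj, hArow]
    simpa [sub_sub] using this
  have hSS : ∀ x, DA (DA x) = x - adjoint Arow (Arow x) := by
    intro x
    have := congrArg (fun T : WithLp 2 (H × H) →L[ℂ] WithLp 2 (H × H) => T x) hDA_sq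
    simpa using this
  have hint := sqrt_intertwine DA Dstar (adjoint Arow) hDA_pos hDstar_pos hDstar_inj
    (fun v => by rw [hSS, hDD, map_sub])
  have hDAinj : ∀ x, DA x = 0 → x = 0 := by
    intro x hx
    have h1 : x = adjoint Arow (Arow x) := by
      have := hSS x
      rw [hx, map_zero] at this
      exact (sub_eq_zero.1 this.symm)
    have h2 : Dstar (Dstar (Arow x)) = 0 := by
      rw [hDD, ← h1, sub_self]
    have h3 : Arow x = 0 :=
      hDstar_inj (hDstar_inj (by rw [h2, map_zero, map_zero]))
    rw [h1, h3, map_zero]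
  have hDsa : adjoint Dstar = Dstar := hDstar_pos.isSelfAdjoint
  have hSsa : adjoint DA = DA := hDA_pos.isSelfAdjoint
  set w : H := adjoint R (Dstar (Dstar y)) with hw
  have hker : DA (adjoint Zrow w - adjoint Arow y) = 0 := by
    rw [map_sub, hint, hw]
    simpa [adjoint_comp, hDsa, hSsa, sub_eq_neg_add] using hθ
  have hAZ : adjoint Arow y = adjoint Zrow w := (sub_eq_zero.1 (hDAinj _ hker)).symm
  have hAZ' := hAZ
  rw [hAadj, hZadj] at hAZ'
  have hpair := (WithLp.equiv 2 (H × H)).symm.injective hAZ'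
  have h1 : adjoint A₁ y = (starRingEnd ℂ z₁) • w := by
    simpa [← star_eq_adjoint] using congrArg Prod.fst hpair
  have h2 : adjoint A₂ y = (starRingEnd ℂ z₂) • w := by
    simpa [← star_eq_adjoint] using congrArg Prod.snd hpair
  have hRw : w - (starRingEnd ℂ z₁) • A₁ w - (starRingEnd ℂ z₂) • A₂ w
      = Dstar (Dstar y) := by
    have h3 := congrArg (fun T : H →L[ℂ] H => star T (Dstar (Dstar y))) hR₁
    simpa [← star_eq_adjoint, hw] using h3
  have hwy : w = y := by
    rw [hDD, hAadj, hArow, h1, h2, map_smul, map_smul, sub_sub] at hRw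
    exact sub_left_injective hRw
  rw [hwy] at h1 h2
  obtain ⟨p, hp⟩ := hsurj y
  apply hy
  rw [← inner_self_eq_zero (𝕜 := ℂ)]
  nth_rewrite 2 [← hp]
  simp [inner_sub_right, ← adjoint_inner_left, h1, h2, inner_smul_left, inner_smul_right]
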